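/- Vekua-type characterization of monogenicity: Let D ⊆ ℝ^{p+2} be a domain invariant under (x_p, r) ↦ (x_p, −r) and let f(x) = F₁(x') + ωF₂(x') ∈ GS¹(Ω_D) ∩ C¹(Ω_D, 𝔸). Then f is left monogenic on Ω_D (D_x f = 0) if and only if the components satisfy, for all x' ∈ D ∖ ℝ^{p+1}: D_{x_p}F₁(x') − ∂_r F₂(x') = ((q−1)/r) F₂(x') and D̄_{x_p}F₂(x') + ∂_r F₁(x') = 0. -/

import Mathlib

open scoped BigOperators
open Filter Topology

namespace GPSM

variable (A : Type*) [NormedAddCommGroup A] [NormedSpace ℝ A] [Mul A] [One A]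

/-- `A` is a real alternative algebra with unit `1`, of finite dimension `d > 1`,
equipped with an anti-involution `conj` (a real-linear map with `(a^c)^c = a`,
`(ab)^c = b^c a^c`, fixing the reals).  The associator is alternating (left/right
alternative laws). -/
structure IsAltStarAlg (conj : A → A) : Prop where
  finDim : FiniteDimensional ℝ A
  one_lt_finrank : 1 < Module.finrank ℝ A
  mul_add' : ∀ a b c : A, a * (b + c) = a * b + a * c
  add_mul' : ∀ a b c : A, (a + b) * c = a * c + b * c
  smul_mul' : ∀ (r : ℝ) (a b : A), (r • a) * b = r • (a * b)
  mul_smul' : ∀ (r : ℝ) (a b : A), a * (r • b) = r • (a * b)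
  one_mul' : ∀ a : A, 1 * a = a
  mul_one' : ∀ a : A, a * 1 = a
  alt_left : ∀ a b : A, a * (a * b) = a * a * b
  alt_right : ∀ a b : A, a * b * b = a * (b * b)
  conj_add : ∀ a b : A, conj (a + b) = conj a + conj b
  conj_smul : ∀ (r : ℝ) (a : A), conj (r • a) = r • conj a
  conj_conj : ∀ a : A, conj (conj a) = a
  conj_mul : ∀ a b : A, conj (a * b) = conj b * conj a
  conj_one : conj 1 = 1

/-- `v 0, v 1, …, v m` is a hypercomplex basis of the hypercomplex subspace
`M = span(v 0, …, v m)` of `A`: `v 0 = 1`, `t(v s) = 0`, `n(v s) = 1`, the `v s`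
anticommute for distinct `s, t ∈ {1,…,m}`, they are linearly independent, and
`M` is contained in the quadratic cone `Q_A`. -/
structure IsHypBasis (conj : A → A) (v : ℕ → A) (m : ℕ) : Prop where
  v_zero : v 0 = 1
  trace_zero : ∀ s, 1 ≤ s → s ≤ m → v s + conj (v s) = 0
  norm_one : ∀ s, 1 ≤ s → s ≤ m → v s * conj (v s) = 1
  anticomm : ∀ s t, 1 ≤ s → s ≤ m → 1 ≤ t → t ≤ m → s ≠ t → v s * v t = -(v t * v s)
  indep : LinearIndependent ℝ (fun i : Fin (m + 1) => v i)
  mem_cone : ∀ x ∈ Submodule.span ℝ (Set.range fun i : Fin (m + 1) => v (i : ℕ)),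
      ∃ tr nr : ℝ, x + conj x = tr • (1 : A) ∧ x * conj x = nr • (1 : A) ∧
        ((∃ r : ℝ, x = r • (1 : A)) ∨ tr ^ 2 < 4 * nr)

variable {A}

/-- Identification of `ℝ^{m+1}` with the hypercomplex subspace `M`:
`(x_0,…,x_m) ↦ Σ x_s • v s`. -/
def emb (v : ℕ → A) (m : ℕ) (x : Fin (m + 1) → ℝ) : A :=
  ∑ s : Fin (m + 1), x s • v (s : ℕ)

/-- First `p+1` coordinates of a point of `M ≅ ℝ^{m+1}`, i.e. the `x_p`-part. -/
def projP (m p : ℕ) (x : Fin (m + 1) → ℝ) : Fin (p + 1) → ℝ := fun s =>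
  if h : (s : ℕ) < m + 1 then x ⟨(s : ℕ), h⟩ else 0

/-- Inclusion `ℝ^{p+1} ⊆ ℝ^{m+1}` (remaining coordinates `0`). -/
def injP (m p : ℕ) (y : Fin (p + 1) → ℝ) : Fin (m + 1) → ℝ := fun s =>
  if h : (s : ℕ) < p + 1 then y ⟨(s : ℕ), h⟩ else 0

/-- The coordinates of `x_q` (last `q = m - p` coordinates of `x`). -/
def xqpart (m p : ℕ) (x : Fin (m + 1) → ℝ) : Fin (m + 1) → ℝ := fun s =>
  if (s : ℕ) ≤ p then 0 else x s

/-- The coordinates of `x_p` inside `ℝ^{m+1}`. -/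
def xppart (m p : ℕ) (x : Fin (m + 1) → ℝ) : Fin (m + 1) → ℝ := fun s =>
  if (s : ℕ) ≤ p then x s else 0

/-- `r = |x_q|`. -/
noncomputable def rad (m p : ℕ) (x : Fin (m + 1) → ℝ) : ℝ :=
  Real.sqrt (∑ s : Fin (m + 1), (xqpart m p x s) ^ 2)

/-- `ω = x_q / |x_q|` (coordinates), `0` when `x_q = 0`. -/
noncomputable def normq (m p : ℕ) (x : Fin (m + 1) → ℝ) : Fin (m + 1) → ℝ :=
  (rad m p x)⁻¹ • xqpart m p x

/-- The reflection `x = x_p + x_q ↦ x_⋄ = x_p - x_q`. -/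
def reflP (m p : ℕ) (x : Fin (m + 1) → ℝ) : Fin (m + 1) → ℝ := fun s =>
  if (s : ℕ) ≤ p then x s else -x s

/-- The sphere `𝕊 = {x_q ∈ span(v_{p+1},…,v_m) : x_q² = -1}`, in coordinates. -/
def Sph (v : ℕ → A) (m p : ℕ) : Set (Fin (m + 1) → ℝ) :=
  {w | (∀ s : Fin (m + 1), (s : ℕ) ≤ p → w s = 0) ∧ emb v m w * emb v m w = -1}

/-- The point `x_p + r ω` of `M ≅ ℝ^{m+1}`. -/
def pt (m p : ℕ) (w : Fin (m + 1) → ℝ) (y : Fin (p + 1) → ℝ) (r : ℝ) :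
    Fin (m + 1) → ℝ :=
  injP m p y + r • w

/-- The slice `Ω_ω ⊆ ℝ^{p+2}` of `Ω` at `ω`. -/
def sliceSet (m p : ℕ) (Ω : Set (Fin (m + 1) → ℝ)) (w : Fin (m + 1) → ℝ) :
    Set ((Fin (p + 1) → ℝ) × ℝ) := {z | pt m p w z.1 z.2 ∈ Ω}

/-- The restriction `f_ω` of `f` to the slice at `ω`, as a function on `ℝ^{p+2}`. -/
def sliceFun (m p : ℕ) (f : (Fin (m + 1) → ℝ) → A) (w : Fin (m + 1) → ℝ) :
    (Fin (p + 1) → ℝ) × ℝ → A := fun z => f (pt m p w z.1 z.2)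

/-- Partial derivative `∂_{x_s}` of a function on `ℝ^{m+1}`. -/
noncomputable def pdF (m : ℕ) (s : Fin (m + 1)) (f : (Fin (m + 1) → ℝ) → A)
    (x : Fin (m + 1) → ℝ) : A := fderiv ℝ f x (Pi.single s 1)

/-- Partial derivative `∂_{x_s}` of a function on `ℝ^{p+1}`. -/
noncomputable def pdP (p : ℕ) (s : Fin (p + 1)) (g : (Fin (p + 1) → ℝ) → A)
    (y : Fin (p + 1) → ℝ) : A := fderiv ℝ g y (Pi.single s 1)

/-- Partial derivative `∂_{x_s}` of a function on `ℝ^{p+2} = ℝ^{p+1} × ℝ`. -/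
noncomputable def pdSx (p : ℕ) (s : Fin (p + 1)) (G : (Fin (p + 1) → ℝ) × ℝ → A)
    (z : (Fin (p + 1) → ℝ) × ℝ) : A := fderiv ℝ G z (Pi.single s 1, 0)

/-- Partial derivative `∂_r` of a function on `ℝ^{p+2} = ℝ^{p+1} × ℝ`. -/
noncomputable def pdSr (p : ℕ) (G : (Fin (p + 1) → ℝ) × ℝ → A)
    (z : (Fin (p + 1) → ℝ) × ℝ) : A := fderiv ℝ G z (0, 1)

/-- Second partial derivative `∂_r²`. -/
noncomputable def pdSr2 (p : ℕ) (G : (Fin (p + 1) → ℝ) × ℝ → A)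
    (z : (Fin (p + 1) → ℝ) × ℝ) : A := pdSr p (pdSr p G) z

/-- The operator `Σ_{lo ≤ s ≤ hi} v_s ∂_{x_s}` on functions on `ℝ^{m+1}`.
`Dop v m 0 p` is `D_{x_p}`, `Dop v m (p+1) m` is `D_{x_q}`, `Dop v m 0 m` is `D_x`. -/
noncomputable def Dop (v : ℕ → A) (m lo hi : ℕ) (f : (Fin (m + 1) → ℝ) → A)
    (x : Fin (m + 1) → ℝ) : A :=
  ∑ s : Fin (m + 1), if lo ≤ (s : ℕ) ∧ (s : ℕ) ≤ hi then v (s : ℕ) * pdF m s f x else 0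

/-- The conjugate operator `∂_{x_0} - Σ_{1 ≤ s ≤ hi} v_s ∂_{x_s}` on functions on
`ℝ^{m+1}`; `Dbarop v m p` is `D̄_{x_p}`, `Dbarop v m m` is `D̄_x`. -/
noncomputable def Dbarop (v : ℕ → A) (m hi : ℕ) (f : (Fin (m + 1) → ℝ) → A)
    (x : Fin (m + 1) → ℝ) : A :=
  pdF m 0 f x -
    ∑ s : Fin (m + 1), if 1 ≤ (s : ℕ) ∧ (s : ℕ) ≤ hi then v (s : ℕ) * pdF m s f x else 0

/-- The operator `D_{x_p} = Σ_{s=0}^p v_s ∂_{x_s}` on functions on `ℝ^{p+1}`. -/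
noncomputable def DopP (v : ℕ → A) (p : ℕ) (g : (Fin (p + 1) → ℝ) → A)
    (y : Fin (p + 1) → ℝ) : A :=
  ∑ s : Fin (p + 1), v (s : ℕ) * pdP p s g y

/-- The operator `D̄_{x_p} = ∂_{x_0} - Σ_{s=1}^p v_s ∂_{x_s}` on functions on `ℝ^{p+1}`. -/
noncomputable def DbaropP (v : ℕ → A) (p : ℕ) (g : (Fin (p + 1) → ℝ) → A)
    (y : Fin (p + 1) → ℝ) : A :=
  pdP p 0 g y - ∑ s : Fin (p + 1), if 1 ≤ (s : ℕ) then v (s : ℕ) * pdP p s g y else 0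

/-- The operator `D_{x_p}` on functions on `ℝ^{p+2} = ℝ^{p+1} × ℝ`. -/
noncomputable def DopSx (v : ℕ → A) (p : ℕ) (G : (Fin (p + 1) → ℝ) × ℝ → A)
    (z : (Fin (p + 1) → ℝ) × ℝ) : A :=
  ∑ s : Fin (p + 1), v (s : ℕ) * pdSx p s G z

/-- The operator `D̄_{x_p}` on functions on `ℝ^{p+2} = ℝ^{p+1} × ℝ`. -/
noncomputable def DbaropSx (v : ℕ → A) (p : ℕ) (G : (Fin (p + 1) → ℝ) × ℝ → A)
    (z : (Fin (p + 1) → ℝ) × ℝ) : A :=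
  pdSx p 0 G z - ∑ s : Fin (p + 1), if 1 ≤ (s : ℕ) then v (s : ℕ) * pdSx p s G z else 0

/-- The Laplacian `Δ_x` on functions on `ℝ^{m+1}`. -/
noncomputable def lapF (m : ℕ) (f : (Fin (m + 1) → ℝ) → A)
    (x : Fin (m + 1) → ℝ) : A :=
  ∑ s : Fin (m + 1), pdF m s (pdF m s f) x

/-- The Laplacian `Δ_{x_p}` on functions on `ℝ^{p+1}`. -/
noncomputable def lapP (p : ℕ) (g : (Fin (p + 1) → ℝ) → A)
    (y : Fin (p + 1) → ℝ) : A :=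
  ∑ s : Fin (p + 1), pdP p s (pdP p s g) y

/-- Iterated Laplacian `Δ_x^k`. -/
noncomputable def lapIterF (m k : ℕ) (f : (Fin (m + 1) → ℝ) → A) :
    (Fin (m + 1) → ℝ) → A :=
  (fun g => lapF m g)^[k] f

/-- Iterated Laplacian `Δ_{x_p}^k`. -/
noncomputable def lapIterP (p k : ℕ) (g : (Fin (p + 1) → ℝ) → A) :
    (Fin (p + 1) → ℝ) → A :=
  (fun h => lapP p h)^[k] g

/-- The Laplacian `Δ_{x'} = Δ_{x_p} + ∂_r²` on functions on `ℝ^{p+2}`. -/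
noncomputable def lapSx (p : ℕ) (G : (Fin (p + 1) → ℝ) × ℝ → A)
    (z : (Fin (p + 1) → ℝ) × ℝ) : A :=
  (∑ s : Fin (p + 1), pdSx p s (pdSx p s G) z) + pdSr2 p G z

/-- The slice Cauchy-Riemann operator `D_ω = D_{x_p} + ω ∂_r` applied to a function
on `ℝ^{p+2}`, where `ω` is given in coordinates by `w`. -/
noncomputable def DomCR (v : ℕ → A) (m p : ℕ) (w : Fin (m + 1) → ℝ)
    (G : (Fin (p + 1) → ℝ) × ℝ → A) (z : (Fin (p + 1) → ℝ) × ℝ) : A :=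
  DopSx v p G z + emb v m w * pdSr p G z

/-- `f` is left generalized partial-slice monogenic (of type `(p, m-p)`) on `Ω`. -/
def GSM (v : ℕ → A) (m p : ℕ) (f : (Fin (m + 1) → ℝ) → A)
    (Ω : Set (Fin (m + 1) → ℝ)) : Prop :=
  ∀ w ∈ Sph v m p, ContDiffOn ℝ 1 (sliceFun m p f w) (sliceSet m p Ω w) ∧
    ∀ z ∈ sliceSet m p Ω w, DomCR v m p w (sliceFun m p f w) z = 0

/-- `Ω` is partially symmetric with respect to `ℝ^{p+1}`. -/
def PSym (v : ℕ → A) (m p : ℕ) (Ω : Set (Fin (m + 1) → ℝ)) : Prop :=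
  ∀ x ∈ Ω, ∀ w ∈ Sph v m p, xppart m p x + rad m p x • w ∈ Ω

/-- `Ω` is a slice domain: a domain meeting `ℝ^{p+1}` all of whose slices are
domains in `ℝ^{p+2}`. -/
def SliceDomain (v : ℕ → A) (m p : ℕ) (Ω : Set (Fin (m + 1) → ℝ)) : Prop :=
  IsOpen Ω ∧ IsConnected Ω ∧ (∃ x ∈ Ω, xqpart m p x = 0) ∧
    ∀ w ∈ Sph v m p, IsConnected (sliceSet m p Ω w)

/-- The reflection `(x_p, r) ↦ (x_p, -r)` of `ℝ^{p+2}`. -/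
def reflD (p : ℕ) (z : (Fin (p + 1) → ℝ) × ℝ) : (Fin (p + 1) → ℝ) × ℝ := (z.1, -z.2)

/-- The p-symmetric completion `Ω_D ⊆ M` of `D ⊆ ℝ^{p+2}`. -/
def OmegaD (v : ℕ → A) (m p : ℕ) (D : Set ((Fin (p + 1) → ℝ) × ℝ)) :
    Set (Fin (m + 1) → ℝ) :=
  {x | ∃ w ∈ Sph v m p, ∃ z ∈ D, x = pt m p w z.1 z.2}

/-- `(F₁, F₂)` satisfies the even-odd (stem function) conditions on `D`. -/
def IsStem (p : ℕ) (D : Set ((Fin (p + 1) → ℝ) × ℝ))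
    (F₁ F₂ : (Fin (p + 1) → ℝ) × ℝ → A) : Prop :=
  ∀ z ∈ D, F₁ (reflD p z) = F₁ z ∧ F₂ (reflD p z) = -F₂ z

/-- `f` is the generalized partial-slice function induced by the stem `(F₁, F₂)`:
`f(x_p + rω) = F₁(x_p, r) + ω F₂(x_p, r)`. -/
def Induced (v : ℕ → A) (m p : ℕ) (D : Set ((Fin (p + 1) → ℝ) × ℝ))
    (F₁ F₂ : (Fin (p + 1) → ℝ) × ℝ → A) (f : (Fin (m + 1) → ℝ) → A) : Prop :=
  ∀ w ∈ Sph v m p, ∀ z ∈ D, f (pt m p w z.1 z.2) = F₁ z + emb v m w * F₂ z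

/-- The generalized Cauchy-Riemann system for the stem `(F₁, F₂)` on `D`. -/
def StemCR (v : ℕ → A) (p : ℕ) (D : Set ((Fin (p + 1) → ℝ) × ℝ))
    (F₁ F₂ : (Fin (p + 1) → ℝ) × ℝ → A) : Prop :=
  ∀ z ∈ D, DopSx v p F₁ z - pdSr p F₂ z = 0 ∧ DbaropSx v p F₂ z + pdSr p F₁ z = 0

/-- `f` is generalized partial-slice regular on `Ω_D`. -/
def MemGSR (v : ℕ → A) (m p : ℕ) (D : Set ((Fin (p + 1) → ℝ) × ℝ))
    (f : (Fin (m + 1) → ℝ) → A) : Prop :=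
  ∃ F₁ F₂ : (Fin (p + 1) → ℝ) × ℝ → A, IsStem p D F₁ F₂ ∧
    ContDiffOn ℝ 1 F₁ D ∧ ContDiffOn ℝ 1 F₂ D ∧
    Induced v m p D F₁ F₂ f ∧ StemCR v p D F₁ F₂

/-- `f` is a generalized partial-slice function on `Ω`. -/
def MemGS (v : ℕ → A) (m p : ℕ) (Ω : Set (Fin (m + 1) → ℝ))
    (f : (Fin (m + 1) → ℝ) → A) : Prop :=
  ∃ F₁ F₂ : (Fin (p + 1) → ℝ) × ℝ → A,
    (∀ z : (Fin (p + 1) → ℝ) × ℝ, F₁ (reflD p z) = F₁ z ∧ F₂ (reflD p z) = -F₂ z) ∧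
    ∀ x ∈ Ω, f x = F₁ (projP m p x, rad m p x) +
      emb v m (normq m p x) * F₂ (projP m p x, rad m p x)

/-- Non-associative power: `a^n` with products taken from the right. -/
def apow (a : A) (n : ℕ) : A := (fun b => a * b)^[n] 1

/-- Partial even part `PE[f](x) = (f(x) + f(x_⋄))/2`. -/
noncomputable def PE (m p : ℕ) (f : (Fin (m + 1) → ℝ) → A)
    (x : Fin (m + 1) → ℝ) : A := (2 : ℝ)⁻¹ • (f x + f (reflP m p x))

/-- Partial odd part `PO[f](x) = (f(x) - f(x_⋄))/2`. -/
noncomputable def PO (m p : ℕ) (f : (Fin (m + 1) → ℝ) → A)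
    (x : Fin (m + 1) → ℝ) : A := (2 : ℝ)⁻¹ • (f x - f (reflP m p x))

/-- `Ω₀* = {x_p + x_q : x_p ∈ Ω₀, x_q ∈ ℝ^q}`. -/
def Omega0star (m p : ℕ) (Ω₀ : Set (Fin (p + 1) → ℝ)) : Set (Fin (m + 1) → ℝ) :=
  {x | projP m p x ∈ Ω₀}

/-- The spherical derivative `f'_s(x) = (1/2) x_q⁻¹ (f(x) - f(x_⋄))`
(using `x_q⁻¹ = -x_q/|x_q|²`). -/
noncomputable def sder (v : ℕ → A) (m p : ℕ) (f : (Fin (m + 1) → ℝ) → A)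
    (x : Fin (m + 1) → ℝ) : A :=
  -(((2 : ℝ) * rad m p x ^ 2)⁻¹) • (emb v m (xqpart m p x) * (f x - f (reflP m p x)))

/-- The spherical Dirac operator
`Γ f = -(1/2) Σ_{p+1 ≤ i,j ≤ m} v_i (v_j (L_{ij} f))`. -/
noncomputable def sphericalGamma (v : ℕ → A) (m p : ℕ) (f : (Fin (m + 1) → ℝ) → A)
    (x : Fin (m + 1) → ℝ) : A :=
  -((2 : ℝ)⁻¹) • ∑ i : Fin (m + 1), ∑ j : Fin (m + 1),
    if p < (i : ℕ) ∧ p < (j : ℕ) then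
      v (i : ℕ) * (v (j : ℕ) * (x i • pdF m j f x - x j • pdF m i f x)) else 0

/-- The slice Cauchy-Riemann operator `D_ω` applied to (the slice restriction of) a
function `f` on `M`, at the point `x` (with `ω = x_q/|x_q|`). -/
noncomputable def DomCRat (v : ℕ → A) (m p : ℕ) (f : (Fin (m + 1) → ℝ) → A)
    (x : Fin (m + 1) → ℝ) : A :=
  DomCR v m p (normq m p x) (sliceFun m p f (normq m p x)) (projP m p x, rad m p x)

/-- `f` is left monogenic on `Ω`: `f ∈ C¹` and `D_x f = 0`. -/
def Monogenic (v : ℕ → A) (m : ℕ) (f : (Fin (m + 1) → ℝ) → A)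
    (Ω : Set (Fin (m + 1) → ℝ)) : Prop :=
  ContDiffOn ℝ 1 f Ω ∧ ∀ x ∈ Ω, Dop v m 0 m f x = 0

/-- `f` is harmonic on `Ω`: `f ∈ C²` and `Δ_x f = 0`. -/
def Harmonic (m : ℕ) (f : (Fin (m + 1) → ℝ) → A)
    (Ω : Set (Fin (m + 1) → ℝ)) : Prop :=
  ContDiffOn ℝ 2 f Ω ∧ ∀ x ∈ Ω, lapF m f x = 0

/-- A family of functions converges normally (locally a summable uniform bound). -/
def NormallyConvOn {E F : Type*} [TopologicalSpace E] [NormedAddCommGroup F]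
    (u : ℕ → E → F) (s : Set E) : Prop :=
  ∀ x ∈ s, ∃ U ∈ nhds x, ∃ c : ℕ → ℝ, Summable c ∧ ∀ k : ℕ, ∀ y ∈ U, ‖u k y‖ ≤ c k

/-- The generalized partial-slice CK-extension
`CK[f₀](x) = Σ_k (r^{2k}/(2k)!)(-Δ_{x_p})^k f₀(x_p)
  + ω Σ_k (r^{2k+1}/(2k+1)!)(-Δ_{x_p})^k (D_{x_p} f₀)(x_p)`. -/
noncomputable def CKe (v : ℕ → A) (m p : ℕ) (f₀ : (Fin (p + 1) → ℝ) → A)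
    (x : Fin (m + 1) → ℝ) : A :=
  (∑' k : ℕ, (((-1 : ℝ) ^ k * rad m p x ^ (2 * k)) / (2 * k).factorial) •
      lapIterP p k f₀ (projP m p x)) +
  emb v m (normq m p x) *
    ∑' k : ℕ, (((-1 : ℝ) ^ k * rad m p x ^ (2 * k + 1)) / (2 * k + 1).factorial) •
      lapIterP p k (DopP v p f₀) (projP m p x)

/-- The coefficient `Γ(q/2)(-1)^k r^{2k} / (2^{2k} k! Γ(k + q/2))`. -/
noncomputable def hgckC (q k : ℕ) (r : ℝ) : ℝ :=
  (Real.Gamma ((q : ℝ) / 2) * (-1) ^ k * r ^ (2 * k)) /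
    (2 ^ (2 * k) * (k.factorial : ℝ) * Real.Gamma ((k : ℝ) + (q : ℝ) / 2))

/-- The coefficient `Γ(q/2)(-1)^k r^{2k} / (2^{2k+1} k! Γ(k + q/2 + 1))`. -/
noncomputable def gckC' (q k : ℕ) (r : ℝ) : ℝ :=
  (Real.Gamma ((q : ℝ) / 2) * (-1) ^ k * r ^ (2 * k)) /
    (2 ^ (2 * k + 1) * (k.factorial : ℝ) * Real.Gamma ((k : ℝ) + (q : ℝ) / 2 + 1))

/-- The coefficient `Γ(q/2 + 1)(-1)^k r^{2k} / (2^{2k} k! Γ(k + q/2 + 1))`. -/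
noncomputable def hgckC' (q k : ℕ) (r : ℝ) : ℝ :=
  (Real.Gamma ((q : ℝ) / 2 + 1) * (-1) ^ k * r ^ (2 * k)) /
    (2 ^ (2 * k) * (k.factorial : ℝ) * Real.Gamma ((k : ℝ) + (q : ℝ) / 2 + 1))

/-- The monogenic generalized CK-extension `GCK[A₀]`. -/
noncomputable def GCKe (v : ℕ → A) (m p : ℕ) (A₀ : (Fin (p + 1) → ℝ) → A)
    (x : Fin (m + 1) → ℝ) : A :=
  (∑' k : ℕ, hgckC (m - p) k (rad m p x) • lapIterP p k A₀ (projP m p x)) +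
  emb v m (xqpart m p x) *
    ∑' k : ℕ, gckC' (m - p) k (rad m p x) • lapIterP p k (DopP v p A₀) (projP m p x)

/-- The harmonic generalized CK-extension `HGCK[A₀, A₁]`. -/
noncomputable def HGCKe (v : ℕ → A) (m p : ℕ) (A₀ A₁ : (Fin (p + 1) → ℝ) → A)
    (x : Fin (m + 1) → ℝ) : A :=
  (∑' k : ℕ, hgckC (m - p) k (rad m p x) • lapIterP p k A₀ (projP m p x)) +
  emb v m (xqpart m p x) *
    ∑' k : ℕ, hgckC' (m - p) k (rad m p x) • lapIterP p k A₁ (projP m p x)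

/-- The operator `(1/r)∂_r`, extended to `r = 0` by its limit `∂_r²` (on even
functions). -/
noncomputable def T1 (p : ℕ) (G : (Fin (p + 1) → ℝ) × ℝ → A) :
    (Fin (p + 1) → ℝ) × ℝ → A := fun z =>
  if z.2 = 0 then pdSr2 p G z else (z.2)⁻¹ • pdSr p G z

/-- The operator `∂_r ∘ (1/r)`, extended to `r = 0` by its limit `(1/2)∂_r²` (on odd
functions). -/
noncomputable def T2 (p : ℕ) (G : (Fin (p + 1) → ℝ) × ℝ → A) :
    (Fin (p + 1) → ℝ) × ℝ → A := fun z =>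
  if z.2 = 0 then (2 : ℝ)⁻¹ • pdSr2 p G z
  else fderiv ℝ (fun t : ℝ => t⁻¹ • G (z.1, t)) z.2 1

/-- `C_q(k) = (q-1)(q-3)⋯(q-2k+1)`, `C_q(0) = 1`. -/
noncomputable def cq (q k : ℕ) : ℝ :=
  ∏ i ∈ Finset.range k, ((q : ℝ) - (2 * (i : ℝ) + 1))

/-- Double factorial. -/
def dfac : ℕ → ℕ
  | 0 => 1
  | 1 => 1
  | n + 2 => (n + 2) * dfac n

/-- The Fueter-Sce constant `γ_q = (-1)^{(q-1)/2} (q-1)!!/(q-2)!!`. -/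
noncomputable def gammaQ (q : ℕ) : ℝ :=
  (-1 : ℝ) ^ ((q - 1) / 2) * (dfac (q - 1) : ℝ) / (dfac (q - 2) : ℝ)

/-!
Fix `x = x_p + rω` with `r ≠ 0`. The derivative of `f = F₁ + ωF₂` along the slice of `ω` is read off
from the stem, and along a direction `u ∈ ℝ^q` orthogonal to `ω` it equals `r⁻¹ (u F₂)`, because
moving `ω` on the sphere leaves `F₁` and `F₂` unchanged. Multiplying by the `v_s` and summing, left
alternativity and the anticommutation of `ω` with `v_1, …, v_p` give
`D_x f = (D_{x_p} F₁ - ∂_r F₂ - ((q - 1)/r) F₂) + ω (D̄_{x_p} F₂ + ∂_r F₁)`.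
Comparing the values at `ω` and `-ω` separates the two brackets. The points with `r = 0` are reached
by continuity of `D_x f`.
-/

/-! ### Left alternative algebras -/

/-- A real algebra with a left unit, the left alternative law and continuous left multiplications,
as a predicate on bare operations like `IsAltStarAlg`. -/
structure IsLeftAltAlg (A : Type*) [NormedAddCommGroup A] [NormedSpace ℝ A] [Mul A] [One A] :
    Prop where
  protected mul_add : ∀ a b c : A, a * (b + c) = a * b + a * c
  protected add_mul : ∀ a b c : A, (a + b) * c = a * c + b * c
  protected smul_mul : ∀ (r : ℝ) (a b : A), (r • a) * b = r • (a * b)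
  protected mul_smul : ∀ (r : ℝ) (a b : A), a * (r • b) = r • (a * b)
  protected one_mul : ∀ a : A, 1 * a = a
  mul_mul_self : ∀ a b : A, a * (a * b) = a * a * b
  continuous_mul_left : ∀ a : A, Continuous (a * ·)

theorem IsAltStarAlg.isLeftAltAlg {conj : A → A} (H : IsAltStarAlg A conj) : IsLeftAltAlg A where
  mul_add := H.mul_add'
  add_mul := H.add_mul'
  smul_mul := H.smul_mul'
  mul_smul := H.mul_smul'
  one_mul := H.one_mul'
  mul_mul_self := H.alt_left
  continuous_mul_left a :=
    haveI := H.finDim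
    LinearMap.continuous_of_finiteDimensional
      ({ toFun := (a * ·), map_add' := H.mul_add' a, map_smul' := (H.mul_smul' · a) } : A →ₗ[ℝ] A)

namespace IsLeftAltAlg

/-- The left multiplication operators `b ↦ a * b`, bundled linearly in `a`. -/
def leftMul (hA : IsLeftAltAlg A) : A →ₗ[ℝ] A →L[ℝ] A where
  toFun a :=
    { toFun := (a * ·)
      map_add' := hA.mul_add a
      map_smul' := (hA.mul_smul · a)
      cont := hA.continuous_mul_left a }
  map_add' a b := ContinuousLinearMap.ext (hA.add_mul a b)
  map_smul' r a := ContinuousLinearMap.ext (hA.smul_mul r a)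

theorem leftMul_apply (hA : IsLeftAltAlg A) (a b : A) : hA.leftMul a b = a * b := rfl

protected theorem mul_zero (hA : IsLeftAltAlg A) (a : A) : a * 0 = 0 := map_zero (hA.leftMul a)

protected theorem mul_neg (hA : IsLeftAltAlg A) (a b : A) : a * -b = -(a * b) :=
  map_neg (hA.leftMul a) b

protected theorem mul_sub (hA : IsLeftAltAlg A) (a b c : A) : a * (b - c) = a * b - a * c :=
  map_sub (hA.leftMul a) b c

protected theorem mul_sum (hA : IsLeftAltAlg A) {ι : Type*} (s : Finset ι) (g : ι → A) (a : A) :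
    a * ∑ i ∈ s, g i = ∑ i ∈ s, a * g i :=
  map_sum (hA.leftMul a) g s

protected theorem zero_mul (hA : IsLeftAltAlg A) (a : A) : 0 * a = 0 :=
  DFunLike.congr_fun (map_zero hA.leftMul) a

protected theorem neg_mul (hA : IsLeftAltAlg A) (a b : A) : -a * b = -(a * b) :=
  DFunLike.congr_fun (map_neg hA.leftMul a) b

protected theorem sub_mul (hA : IsLeftAltAlg A) (a b c : A) : (a - b) * c = a * c - b * c :=
  DFunLike.congr_fun (map_sub hA.leftMul a b) c

protected theorem sum_mul (hA : IsLeftAltAlg A) {ι : Type*} (s : Finset ι) (g : ι → A) (a : A) :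
    (∑ i ∈ s, g i) * a = ∑ i ∈ s, g i * a := by
  simp only [← hA.leftMul_apply, map_sum, sum_apply]

theorem mul_mul_of_mul_self_eq_neg_one (hA : IsLeftAltAlg A) {a : A} (ha : a * a = -1) (b : A) :
    a * (a * b) = -b := by
  rw [hA.mul_mul_self, ha, hA.neg_mul, hA.one_mul]

theorem mul_mul_add_mul_mul (hA : IsLeftAltAlg A) (a b c : A) :
    a * (b * c) + b * (a * c) = (a * b + b * a) * c := by
  have h := hA.mul_mul_self (a + b) c
  simp only [hA.add_mul, hA.mul_add, hA.mul_mul_self] at h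
  rw [hA.add_mul]
  rw [← sub_eq_zero] at h ⊢
  rw [← h]
  abel

theorem mul_mul_eq_neg_of_anticomm (hA : IsLeftAltAlg A) {a b : A} (hab : a * b + b * a = 0)
    (c : A) : a * (b * c) = -(b * (a * c)) :=
  eq_neg_of_add_eq_zero_left <| by rw [hA.mul_mul_add_mul_mul, hab, hA.zero_mul]

theorem eq_zero_of_add_mul_eq_zero (hA : IsLeftAltAlg A) {a b c : A} (ha : a * a = -1)
    (hpos : b + a * c = 0) (hneg : b + -a * c = 0) : b = 0 ∧ c = 0 := by
  rw [hA.neg_mul, ← sub_eq_add_neg, sub_eq_zero] at hneg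
  have hb : b = 0 := by
    rw [← hneg, ← two_smul ℝ] at hpos
    exact (smul_eq_zero_iff_right two_ne_zero).1 hpos
  have hac : a * c = 0 := hneg.symm.trans hb
  refine ⟨hb, neg_eq_zero.1 ?_⟩
  rw [← hA.mul_mul_of_mul_self_eq_neg_one ha, hac, hA.mul_zero]

end IsLeftAltAlg

/-- `v 0 = 1`, and `v 1, …, v m` are pairwise anticommuting square roots of `-1`. -/
structure IsCliffordSystem (v : ℕ → A) (m : ℕ) : Prop where
  v_zero : v 0 = 1
  mul_self : ∀ s, 1 ≤ s → s ≤ m → v s * v s = -1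
  anticomm : ∀ s t, 1 ≤ s → s ≤ m → 1 ≤ t → t ≤ m → s ≠ t → v s * v t = -(v t * v s)

theorem IsHypBasis.isCliffordSystem {conj : A → A} {v : ℕ → A} {m : ℕ}
    (hv : IsHypBasis A conj v m) (hA : IsLeftAltAlg A) : IsCliffordSystem v m where
  v_zero := hv.v_zero
  mul_self s hs hsm := by
    have hconj : conj (v s) = -v s := (neg_eq_of_add_eq_zero_right (hv.trace_zero s hs hsm)).symm
    have hnorm := hv.norm_one s hs hsm
    rw [hconj, hA.mul_neg] at hnorm
    exact neg_eq_iff_eq_neg.1 hnorm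
  anticomm := hv.anticomm

/-! ### The hypercomplex subspace -/

section Emb

variable {E : Type*} [NormedAddCommGroup E] [NormedSpace ℝ E] (v : ℕ → E) (m : ℕ)

theorem emb_eq_linearCombination (x : Fin (m + 1) → ℝ) :
    emb v m x = Fintype.linearCombination ℝ (fun s : Fin (m + 1) => v s) x := rfl

theorem emb_smul (r : ℝ) (x : Fin (m + 1) → ℝ) : emb v m (r • x) = r • emb v m x := by
  simp only [emb_eq_linearCombination, map_smul]

theorem emb_neg (x : Fin (m + 1) → ℝ) : emb v m (-x) = -emb v m x := by
  simp only [emb_eq_linearCombination, map_neg]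

theorem emb_add (x y : Fin (m + 1) → ℝ) : emb v m (x + y) = emb v m x + emb v m y := by
  simp only [emb_eq_linearCombination, map_add]

theorem emb_sub (x y : Fin (m + 1) → ℝ) : emb v m (x - y) = emb v m x - emb v m y := by
  simp only [emb_eq_linearCombination, map_sub]

theorem emb_single_one (s : Fin (m + 1)) : emb v m (Pi.single s 1) = v s := by
  rw [emb_eq_linearCombination, Fintype.linearCombination_apply_single, one_smul]

end Emb

/-- The subspace `ℝ^q` of `ℝ^{m+1}` of the points whose first `p + 1` coordinates vanish. -/
def qSubspace (m p : ℕ) : Submodule ℝ (Fin (m + 1) → ℝ) where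
  carrier := {x | ∀ s : Fin (m + 1), (s : ℕ) ≤ p → x s = 0}
  add_mem' hx hy s hs := by simp [hx s hs, hy s hs]
  zero_mem' _ _ := rfl
  smul_mem' r x hx s hs := by simp [hx s hs]

theorem single_mem_qSubspace {m p : ℕ} {s : Fin (m + 1)} (hs : p < s) (r : ℝ) :
    Pi.single s r ∈ qSubspace m p := fun t ht => by
  have hts : t ≠ s := by rintro rfl; omega
  rw [Pi.single_eq_of_ne hts]

theorem xqpart_mem_qSubspace (m p : ℕ) (x : Fin (m + 1) → ℝ) : xqpart m p x ∈ qSubspace m p :=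
  fun _ hs => if_pos hs

section Multiplication

variable {v : ℕ → A} {m p : ℕ}

theorem emb_mul (hA : IsLeftAltAlg A) (x : Fin (m + 1) → ℝ) (a : A) :
    emb v m x * a = ∑ s, x s • (v s * a) := by
  simp only [emb, hA.sum_mul, hA.smul_mul]

theorem mul_emb (hA : IsLeftAltAlg A) (x : Fin (m + 1) → ℝ) (a : A) :
    a * emb v m x = ∑ s, x s • (a * v s) := by
  simp only [emb, hA.mul_sum, hA.mul_smul]

theorem emb_mul_of_mem_qSubspace (hA : IsLeftAltAlg A) (hp : p < m + 1) {w : Fin (m + 1) → ℝ}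
    (hw : w ∈ qSubspace m p) (a : A) :
    emb v m w * a = ∑ s ∈ Finset.Ioi (⟨p, hp⟩ : Fin (m + 1)), w s • (v s * a) := by
  rw [emb_mul hA]
  refine (Finset.sum_subset (Finset.subset_univ _) fun s _ hs => ?_).symm
  rw [hw s (by simpa [Fin.lt_def] using hs), zero_smul]

theorem emb_mul_emb_add_swap (hA : IsLeftAltAlg A) (hv : IsCliffordSystem v m)
    {u w : Fin (m + 1) → ℝ} (hu : u 0 = 0) (hw : w 0 = 0) :
    emb v m u * emb v m w + emb v m w * emb v m u = (-2 * (u ⬝ᵥ w)) • (1 : A) := by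
  rw [emb_mul hA u, mul_emb hA u, ← Finset.sum_add_distrib, dotProduct, Finset.mul_sum,
    Finset.sum_smul]
  refine Finset.sum_congr rfl fun s _ => ?_
  rcases eq_or_ne s 0 with rfl | hs
  · simp [hu]
  have hs₁ : 1 ≤ (s : ℕ) := Nat.one_le_iff_ne_zero.2 (Fin.val_ne_zero_iff.2 hs)
  rw [mul_emb hA, emb_mul hA, ← smul_add, ← Finset.sum_add_distrib, Finset.sum_eq_single s]
  · rw [hv.mul_self s hs₁ s.is_le]
    module
  · intro t _ hts
    rcases eq_or_ne t 0 with rfl | ht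
    · simp [hw]
    · have ht₁ : 1 ≤ (t : ℕ) := Nat.one_le_iff_ne_zero.2 (Fin.val_ne_zero_iff.2 ht)
      rw [hv.anticomm t s ht₁ t.is_le hs₁ s.is_le (Fin.val_ne_iff.2 hts), smul_neg,
        add_neg_cancel]
  · simp

theorem emb_mul_self (hA : IsLeftAltAlg A) (hv : IsCliffordSystem v m) {w : Fin (m + 1) → ℝ}
    (hw : w 0 = 0) : emb v m w * emb v m w = (-(w ⬝ᵥ w)) • (1 : A) := by
  have h := emb_mul_emb_add_swap hA hv hw hw
  rw [← two_smul ℝ, neg_mul, ← mul_neg, mul_smul] at h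
  exact smul_right_injective A two_ne_zero h

theorem mul_emb_mul (hA : IsLeftAltAlg A) (hv : IsCliffordSystem v m) {s : ℕ} (hs : 1 ≤ s)
    (hsp : s ≤ p) (hpm : p ≤ m) {w : Fin (m + 1) → ℝ} (hw : w ∈ qSubspace m p) (a : A) :
    v s * (emb v m w * a) = -(emb v m w * (v s * a)) := by
  let i : Fin (m + 1) := ⟨s, by omega⟩
  have hi : (Pi.single i 1 : Fin (m + 1) → ℝ) 0 = 0 :=
    Pi.single_eq_of_ne (show 0 ≠ i from Fin.ne_of_val_ne (Nat.ne_of_lt hs)) 1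
  refine hA.mul_mul_eq_neg_of_anticomm ?_ a
  have h := emb_mul_emb_add_swap hA hv hi (hw 0 (Nat.zero_le p))
  rwa [emb_single_one, single_one_dotProduct, hw i hsp, mul_zero, zero_smul] at h

end Multiplication

/-! ### The sphere and the completion `Ω_D` -/

section Coordinates

variable {m p : ℕ}

theorem rad_eq_sqrt_dotProduct (x : Fin (m + 1) → ℝ) :
    rad m p x = √(xqpart m p x ⬝ᵥ xqpart m p x) := by
  simp only [rad, dotProduct, sq]

theorem rad_sq (x : Fin (m + 1) → ℝ) : rad m p x ^ 2 = xqpart m p x ⬝ᵥ xqpart m p x := by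
  rw [rad_eq_sqrt_dotProduct, Real.sq_sqrt]
  exact dotProduct_star_self_nonneg _

theorem xqpart_pt {w : Fin (m + 1) → ℝ} (hw : w ∈ qSubspace m p) (y : Fin (p + 1) → ℝ) (r : ℝ) :
    xqpart m p (pt m p w y r) = r • w := by
  ext s
  by_cases hs : (s : ℕ) ≤ p
  · simp [xqpart, hs, hw s hs]
  · simp [xqpart, pt, injP, hs]

theorem projP_pt (hp : p ≤ m) {w : Fin (m + 1) → ℝ} (hw : w ∈ qSubspace m p)
    (y : Fin (p + 1) → ℝ) (r : ℝ) : projP m p (pt m p w y r) = y := by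
  ext s
  have hsm : (s : ℕ) < m + 1 := by omega
  simp [projP, pt, injP, hsm, s.is_lt, hw ⟨s, hsm⟩ s.is_le, -Order.lt_add_one_iff]

theorem rad_pt {w : Fin (m + 1) → ℝ} (hw : w ∈ qSubspace m p) (hw₁ : w ⬝ᵥ w = 1)
    (y : Fin (p + 1) → ℝ) (r : ℝ) : rad m p (pt m p w y r) = |r| := by
  rw [rad_eq_sqrt_dotProduct, xqpart_pt hw, smul_dotProduct, dotProduct_smul, hw₁, smul_eq_mul,
    smul_eq_mul, mul_one, Real.sqrt_mul_self_eq_abs]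

theorem injP_projP_add_xqpart (x : Fin (m + 1) → ℝ) :
    injP m p (projP m p x) + xqpart m p x = x := by
  ext s
  by_cases hs : (s : ℕ) ≤ p <;> simp [injP, projP, xqpart, hs, s.is_le.not_gt]

theorem injP_single (hp : p ≤ m) (s : Fin (p + 1)) :
    injP m p (Pi.single s 1) = Pi.single (Fin.castLE (by omega) s) 1 := by
  ext t
  by_cases ht : (t : ℕ) < p + 1
  · simp [injP, ht, Pi.single_apply, Fin.ext_iff]
  · have hts : (t : ℕ) ≠ s := by omega
    simp [injP, ht, Fin.ext_iff, hts]

theorem continuous_projP : Continuous (projP m p) :=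
  continuous_pi fun s => by unfold projP; split_ifs <;> fun_prop

theorem continuous_rad : Continuous (rad m p) :=
  Real.continuous_sqrt.comp <| continuous_finsetSum _ fun s _ => by
    unfold xqpart; split_ifs <;> fun_prop

/-- The slice inclusion `(x_p, r) ↦ x_p + rω` as a continuous linear map. -/
noncomputable def ptL (m p : ℕ) (w : Fin (m + 1) → ℝ) :
    ((Fin (p + 1) → ℝ) × ℝ) →L[ℝ] (Fin (m + 1) → ℝ) where
  toFun z := pt m p w z.1 z.2
  map_add' z z' := by
    ext s
    by_cases hs : (s : ℕ) ≤ p <;> simp [pt, injP, hs] <;> ring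
  map_smul' r z := by
    ext s
    by_cases hs : (s : ℕ) ≤ p <;> simp [pt, injP, hs] <;> ring
  cont := continuous_pi fun s => by
    change Continuous fun z : (Fin (p + 1) → ℝ) × ℝ => injP m p z.1 s + z.2 * w s
    unfold injP
    split_ifs <;> fun_prop

theorem ptL_apply (w : Fin (m + 1) → ℝ) (z : (Fin (p + 1) → ℝ) × ℝ) :
    ptL m p w z = pt m p w z.1 z.2 := rfl

end Coordinates

section Completion

variable {v : ℕ → A} {m p : ℕ} {D : Set ((Fin (p + 1) → ℝ) × ℝ)}

theorem mem_Sph_iff [Nontrivial A] (hA : IsLeftAltAlg A) (hv : IsCliffordSystem v m)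
    {w : Fin (m + 1) → ℝ} : w ∈ Sph v m p ↔ w ∈ qSubspace m p ∧ w ⬝ᵥ w = 1 := by
  have one_ne_zero : (1 : A) ≠ 0 := by
    intro h
    obtain ⟨a, ha⟩ := exists_ne (0 : A)
    exact ha (by rw [← hA.one_mul a, h, hA.zero_mul])
  refine and_congr_right fun hw => ?_
  rw [emb_mul_self hA hv (hw 0 (Nat.zero_le p)), neg_smul, neg_inj]
  exact ⟨fun h => smul_left_injective ℝ one_ne_zero (h.trans (one_smul ℝ 1).symm),
    fun h => by rw [h, one_smul]⟩

theorem neg_mem_Sph (hA : IsLeftAltAlg A) {w : Fin (m + 1) → ℝ} (hw : w ∈ Sph v m p) :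
    -w ∈ Sph v m p :=
  ⟨fun s hs => by simp [hw.1 s hs], by
    rw [emb_neg, hA.neg_mul, hA.mul_neg, neg_neg, hw.2]⟩

theorem single_last_mem_Sph [Nontrivial A] (hA : IsLeftAltAlg A) (hv : IsCliffordSystem v m)
    (hp : p < m) : Pi.single (Fin.last m) 1 ∈ Sph v m p :=
  (mem_Sph_iff hA hv).2 ⟨single_mem_qSubspace hp 1, by simp⟩

theorem inv_sqrt_smul_add_smul_mem_Sph [Nontrivial A] (hA : IsLeftAltAlg A)
    (hv : IsCliffordSystem v m) {w u : Fin (m + 1) → ℝ} (hw : w ∈ Sph v m p)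
    (hu : u ∈ qSubspace m p) (hwu : w ⬝ᵥ u = 0) (t : ℝ) :
    (√(1 + (u ⬝ᵥ u) * t ^ 2))⁻¹ • (w + t • u) ∈ Sph v m p := by
  obtain ⟨hwq, hw₁⟩ := (mem_Sph_iff hA hv).1 hw
  have hpos : 0 < 1 + (u ⬝ᵥ u) * t ^ 2 :=
    add_pos_of_pos_of_nonneg one_pos (mul_nonneg (dotProduct_star_self_nonneg u) (sq_nonneg t))
  have hnorm : (w + t • u) ⬝ᵥ (w + t • u) = 1 + (u ⬝ᵥ u) * t ^ 2 := by
    simp only [add_dotProduct, dotProduct_add, smul_dotProduct, dotProduct_smul, hw₁, hwu,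
      dotProduct_comm u w, smul_eq_mul]
    ring
  refine (mem_Sph_iff hA hv).2
    ⟨Submodule.smul_mem _ _ (add_mem hwq (Submodule.smul_mem _ t hu)), ?_⟩
  rw [smul_dotProduct, dotProduct_smul, hnorm, smul_eq_mul, smul_eq_mul, ← mul_assoc,
    ← mul_inv, Real.mul_self_sqrt hpos.le, inv_mul_cancel₀ hpos.ne']

theorem exists_mem_Sph_pt_eq [Nontrivial A] (hA : IsLeftAltAlg A) (hv : IsCliffordSystem v m)
    (hp : p < m) (x : Fin (m + 1) → ℝ) :
    ∃ w ∈ Sph v m p, pt m p w (projP m p x) (rad m p x) = x := by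
  obtain ⟨w, hw, hwx⟩ : ∃ w ∈ Sph v m p, rad m p x • w = xqpart m p x := by
    rcases eq_or_ne (rad m p x) 0 with h | h
    · have hx : xqpart m p x = 0 :=
        dotProduct_self_eq_zero.1 (by rw [← rad_sq, h, zero_pow two_ne_zero])
      exact ⟨_, single_last_mem_Sph hA hv hp, by rw [h, hx, zero_smul]⟩
    · refine ⟨normq m p x, (mem_Sph_iff hA hv).2
        ⟨Submodule.smul_mem _ _ (xqpart_mem_qSubspace m p x), ?_⟩, smul_inv_smul₀ h _⟩
      rw [normq, smul_dotProduct, dotProduct_smul, ← rad_sq, smul_eq_mul, smul_eq_mul]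
      field_simp
  exact ⟨w, hw, by rw [pt, hwx, injP_projP_add_xqpart]⟩

theorem mem_OmegaD_iff [Nontrivial A] (hA : IsLeftAltAlg A) (hv : IsCliffordSystem v m)
    (hp : p < m) {x : Fin (m + 1) → ℝ} :
    x ∈ OmegaD v m p D ↔
      (projP m p x, rad m p x) ∈ D ∨ (projP m p x, -rad m p x) ∈ D := by
  constructor
  · rintro ⟨w, hw, z, hz, rfl⟩
    obtain ⟨hwq, hw₁⟩ := (mem_Sph_iff hA hv).1 hw
    rw [projP_pt hp.le hwq, rad_pt hwq hw₁]
    rcases abs_choice z.2 with h | h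
    · exact .inl (by rwa [h])
    · exact .inr (by rwa [h, neg_neg])
  · obtain ⟨w, hw, hwx⟩ := exists_mem_Sph_pt_eq hA hv hp x
    rintro (hx | hx)
    · exact ⟨w, hw, _, hx, hwx.symm⟩
    · refine ⟨-w, neg_mem_Sph hA hw, _, hx, ?_⟩
      rw [pt, neg_smul_neg]
      exact hwx.symm

theorem isOpen_OmegaD [Nontrivial A] (hA : IsLeftAltAlg A) (hv : IsCliffordSystem v m)
    (hp : p < m) (hD : IsOpen D) : IsOpen (OmegaD v m p D) := by
  have hΩ : OmegaD v m p D =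
      (fun x => (projP m p x, rad m p x)) ⁻¹' D ∪ (fun x => (projP m p x, -rad m p x)) ⁻¹' D :=
    Set.ext fun _ => mem_OmegaD_iff hA hv hp
  rw [hΩ]
  exact (hD.preimage (continuous_projP.prodMk continuous_rad)).union
    (hD.preimage (continuous_projP.prodMk continuous_rad.neg))

end Completion

/-! ### Derivatives of induced functions -/

theorem hasDerivAt_inv_sqrt_smul_add_smul {E : Type*} [NormedAddCommGroup E] [NormedSpace ℝ E]
    (n : ℝ) (a b : E) :
    HasDerivAt (fun t : ℝ => (√(1 + n * t ^ 2))⁻¹ • (a + t • b)) b 0 := by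
  have hroot : HasDerivAt (fun t : ℝ => (√(1 + n * t ^ 2))⁻¹) 0 0 := by
    have hsq : HasDerivAt (fun t : ℝ => 1 + n * t ^ 2) 0 0 := by
      simpa using (((hasDerivAt_id (0 : ℝ)).pow 2).const_mul n).const_add 1
    simpa [Pi.inv_def] using (hsq.sqrt (by simp)).inv (by simp)
  have hline : HasDerivAt (fun t : ℝ => a + t • b) b 0 := by
    simpa using ((hasDerivAt_id (0 : ℝ)).smul_const b).const_add a
  simpa [Pi.smul_def'] using hroot.smul hline

namespace Induced

variable {v : ℕ → A} {m p : ℕ} {D : Set ((Fin (p + 1) → ℝ) × ℝ)}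
  {F₁ F₂ : (Fin (p + 1) → ℝ) × ℝ → A} {f : (Fin (m + 1) → ℝ) → A}
  {z : (Fin (p + 1) → ℝ) × ℝ} {w : Fin (m + 1) → ℝ}

theorem differentiableAt_fst (h : Induced v m p D F₁ F₂ f) (hA : IsLeftAltAlg A) (hD : D ∈ 𝓝 z)
    (hw : w ∈ Sph v m p) (hf : ∀ w ∈ Sph v m p, DifferentiableAt ℝ f (pt m p w z.1 z.2)) :
    DifferentiableAt ℝ F₁ z := by
  have hslice : ∀ w ∈ Sph v m p, DifferentiableAt ℝ (fun z => f (ptL m p w z)) z := fun w hw =>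
    DifferentiableAt.comp z (hf w hw) (ptL m p w).differentiableAt
  refine (((hslice w hw).add (hslice (-w) (neg_mem_Sph hA hw))).const_smul
    (2 : ℝ)⁻¹).congr_of_eventuallyEq ?_
  filter_upwards [hD] with z hz
  simp only [Pi.smul_apply, Pi.add_apply, ptL_apply]
  rw [h w hw z hz, h (-w) (neg_mem_Sph hA hw) z hz, emb_neg, hA.neg_mul]
  module

theorem differentiableAt_snd (h : Induced v m p D F₁ F₂ f) (hA : IsLeftAltAlg A) (hD : D ∈ 𝓝 z)
    (hw : w ∈ Sph v m p) (hf : DifferentiableAt ℝ f (pt m p w z.1 z.2))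
    (hF₁ : DifferentiableAt ℝ F₁ z) : DifferentiableAt ℝ F₂ z := by
  have hslice : DifferentiableAt ℝ (fun z => f (ptL m p w z)) z :=
    DifferentiableAt.comp z hf (ptL m p w).differentiableAt
  refine ((hA.leftMul (emb v m w)).differentiableAt.comp z
    (hF₁.sub hslice)).congr_of_eventuallyEq ?_
  filter_upwards [hD] with z hz
  simp only [Function.comp_apply, Pi.sub_apply, ptL_apply, hA.leftMul_apply]
  rw [h w hw z hz, sub_add_cancel_left, hA.mul_neg, hA.mul_mul_of_mul_self_eq_neg_one hw.2, neg_neg]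

theorem fderiv_pt (h : Induced v m p D F₁ F₂ f) (hA : IsLeftAltAlg A) (hD : D ∈ 𝓝 z)
    (hw : w ∈ Sph v m p) (hf : DifferentiableAt ℝ f (pt m p w z.1 z.2))
    (hF₁ : DifferentiableAt ℝ F₁ z) (hF₂ : DifferentiableAt ℝ F₂ z)
    (d : (Fin (p + 1) → ℝ) × ℝ) :
    fderiv ℝ f (pt m p w z.1 z.2) (pt m p w d.1 d.2) =
      fderiv ℝ F₁ z d + emb v m w * fderiv ℝ F₂ z d := by
  have hslice := HasFDerivAt.comp z hf.hasFDerivAt (ptL m p w).hasFDerivAt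
  have hstem := hF₁.hasFDerivAt.add
    ((hA.leftMul (emb v m w)).hasFDerivAt.comp z hF₂.hasFDerivAt)
  have heq : f ∘ ptL m p w =ᶠ[𝓝 z] F₁ + hA.leftMul (emb v m w) ∘ F₂ := by
    filter_upwards [hD] with z hz using h w hw z hz
  exact DFunLike.congr_fun (hslice.unique (hstem.congr_of_eventuallyEq heq)) d

theorem fderiv_of_dotProduct_eq_zero [Nontrivial A] (h : Induced v m p D F₁ F₂ f)
    (hA : IsLeftAltAlg A) (hv : IsCliffordSystem v m) (hz : z ∈ D) (hw : w ∈ Sph v m p)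
    (hf : DifferentiableAt ℝ f (pt m p w z.1 z.2)) {u : Fin (m + 1) → ℝ} (hu : u ∈ qSubspace m p)
    (hwu : w ⬝ᵥ u = 0) :
    z.2 • fderiv ℝ f (pt m p w z.1 z.2) u = emb v m u * F₂ z := by
  let c : ℝ → ℝ := fun t => (√(1 + (u ⬝ᵥ u) * t ^ 2))⁻¹
  have hpoint : HasDerivAt (fun t => pt m p (c t • (w + t • u)) z.1 z.2) (z.2 • u) 0 :=
    ((hasDerivAt_inv_sqrt_smul_add_smul _ w u).const_smul z.2).const_add _
  have hleft : HasDerivAt (fun t => f (pt m p (c t • (w + t • u)) z.1 z.2))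
      (fderiv ℝ f (pt m p w z.1 z.2) (z.2 • u)) 0 :=
    HasFDerivAt.comp_hasDerivAt 0 (by simpa [c] using hf.hasFDerivAt) hpoint
  have hright : HasDerivAt (fun t => F₁ z + c t • (emb v m w * F₂ z + t • (emb v m u * F₂ z)))
      (emb v m u * F₂ z) 0 :=
    (hasDerivAt_inv_sqrt_smul_add_smul _ _ _).const_add _
  have heq : (fun t => f (pt m p (c t • (w + t • u)) z.1 z.2)) =
      fun t => F₁ z + c t • (emb v m w * F₂ z + t • (emb v m u * F₂ z)) := funext fun t => by
    rw [h _ (inv_sqrt_smul_add_smul_mem_Sph hA hv hw hu hwu t) z hz, emb_smul, emb_add, emb_smul,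
      hA.smul_mul, hA.add_mul, hA.smul_mul]
  rw [← map_smul]
  exact hleft.unique (heq ▸ hright)

theorem fderiv_of_mem_qSubspace [Nontrivial A] (h : Induced v m p D F₁ F₂ f) (hA : IsLeftAltAlg A)
    (hv : IsCliffordSystem v m) (hD : D ∈ 𝓝 z) (hz : z.2 ≠ 0) (hw : w ∈ Sph v m p)
    (hf : DifferentiableAt ℝ f (pt m p w z.1 z.2)) (hF₁ : DifferentiableAt ℝ F₁ z)
    (hF₂ : DifferentiableAt ℝ F₂ z) {u : Fin (m + 1) → ℝ} (hu : u ∈ qSubspace m p) :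
    fderiv ℝ f (pt m p w z.1 z.2) u =
      (w ⬝ᵥ u) • (pdSr p F₁ z + emb v m w * pdSr p F₂ z) +
        z.2⁻¹ • (emb v m u * F₂ z - (w ⬝ᵥ u) • (emb v m w * F₂ z)) := by
  obtain ⟨hwq, hw₁⟩ := (mem_Sph_iff hA hv).1 hw
  have hperp : w ⬝ᵥ (u - (w ⬝ᵥ u) • w) = 0 := by
    rw [dotProduct_sub, dotProduct_smul, hw₁, smul_eq_mul, mul_one, sub_self]
  have htangent := h.fderiv_of_dotProduct_eq_zero hA hv (mem_of_mem_nhds hD) hw hf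
    (sub_mem hu (Submodule.smul_mem _ _ hwq)) hperp
  have hradial : fderiv ℝ f (pt m p w z.1 z.2) w = pdSr p F₁ z + emb v m w * pdSr p F₂ z := by
    have hpt : pt m p w (0 : Fin (p + 1) → ℝ) 1 = w := by
      ext s
      simp [pt, injP]
    simpa only [hpt, pdSr] using h.fderiv_pt hA hD hw hf hF₁ hF₂ (0, 1)
  rw [emb_sub, emb_smul, hA.sub_mul, hA.smul_mul] at htangent
  rw [← htangent, inv_smul_smul₀ hz, ← hradial, ← map_smul, ← map_add, add_sub_cancel]

end Induced

/-! ### The Cauchy–Riemann operator on induced functions -/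

section Sums

variable {E : Type*} [NormedAddCommGroup E] [NormedSpace ℝ E] [Mul E] {v : ℕ → E} {m p : ℕ}

theorem Dop_eq_sum_castLE (hp : p ≤ m) (f : (Fin (m + 1) → ℝ) → E) (x : Fin (m + 1) → ℝ) :
    Dop v m 0 p f x =
      ∑ s : Fin (p + 1), v s * pdF m (Fin.castLE (Nat.succ_le_succ hp) s) f x := by
  refine (Fintype.sum_of_injective _ (Fin.castLE_injective (Nat.succ_le_succ hp)) _ _ ?_ ?_).symm
  · intro s hs
    exact if_neg fun hsp => hs ⟨⟨s, Nat.lt_succ_of_le hsp.2⟩, rfl⟩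
  · intro s
    simp [s.is_le]

theorem Dop_eq_sum_Ioi (hp : p < m + 1) (f : (Fin (m + 1) → ℝ) → E) (x : Fin (m + 1) → ℝ) :
    Dop v m (p + 1) m f x = ∑ s ∈ Finset.Ioi (⟨p, hp⟩ : Fin (m + 1)), v s * pdF m s f x := by
  rw [Dop, ← Finset.sum_filter]
  refine Finset.sum_congr (Finset.ext fun s => ?_) fun _ _ => rfl
  simp [Fin.lt_def, s.is_le]

theorem Dop_add_Dop (f : (Fin (m + 1) → ℝ) → E) (x : Fin (m + 1) → ℝ) :
    Dop v m 0 p f x + Dop v m (p + 1) m f x = Dop v m 0 m f x := by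
  rw [Dop, Dop, Dop, ← Finset.sum_add_distrib]
  refine Finset.sum_congr rfl fun s _ => ?_
  rcases le_or_gt (s : ℕ) p with hs | hs
  · simp [hs, s.is_le, hs.not_gt]
  · simp [hs.not_ge, s.is_le, hs]

end Sums

section Operators

variable {v : ℕ → A} {m p : ℕ}

theorem emb_mul_DbaropSx (hA : IsLeftAltAlg A) (hv : IsCliffordSystem v m) (hp : p ≤ m)
    {w : Fin (m + 1) → ℝ} (hw : w ∈ qSubspace m p) (G : (Fin (p + 1) → ℝ) × ℝ → A)
    (z : (Fin (p + 1) → ℝ) × ℝ) :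
    emb v m w * DbaropSx v p G z = ∑ s : Fin (p + 1), v s * (emb v m w * pdSx p s G z) := by
  rw [DbaropSx, hA.mul_sub, hA.mul_sum, Fin.sum_univ_succ, Fin.sum_univ_succ, Fin.val_zero,
    hv.v_zero, hA.one_mul, if_neg (by norm_num), hA.mul_zero, zero_add, sub_eq_add_neg,
    hA.one_mul, ← Finset.sum_neg_distrib]
  refine congrArg _ (Finset.sum_congr rfl fun s _ => ?_)
  rw [if_pos (by simp), mul_emb_mul hA hv (by simp) s.succ.is_le hp hw]

theorem continuousOn_Dop (hA : IsLeftAltAlg A) {lo hi : ℕ} {f : (Fin (m + 1) → ℝ) → A}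
    {Ω : Set (Fin (m + 1) → ℝ)} (hΩ : IsOpen Ω) (hf : ContDiffOn ℝ 1 f Ω) :
    ContinuousOn (Dop v m lo hi f) Ω := by
  unfold Dop
  apply continuousOn_finsetSum
  intro s _
  split_ifs
  · exact (hA.continuous_mul_left (v s)).comp_continuousOn
      ((hf.continuousOn_fderiv_of_isOpen hΩ le_rfl).clm_apply continuousOn_const)
  · exact continuousOn_const

end Operators

namespace Induced

variable {v : ℕ → A} {m p : ℕ} {D : Set ((Fin (p + 1) → ℝ) × ℝ)}
  {F₁ F₂ : (Fin (p + 1) → ℝ) × ℝ → A} {f : (Fin (m + 1) → ℝ) → A}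
  {z : (Fin (p + 1) → ℝ) × ℝ} {w : Fin (m + 1) → ℝ}

theorem Dop_xp (h : Induced v m p D F₁ F₂ f) (hA : IsLeftAltAlg A)
    (hv : IsCliffordSystem v m) (hp : p ≤ m) (hD : D ∈ 𝓝 z) (hw : w ∈ Sph v m p)
    (hf : DifferentiableAt ℝ f (pt m p w z.1 z.2)) (hF₁ : DifferentiableAt ℝ F₁ z)
    (hF₂ : DifferentiableAt ℝ F₂ z) :
    Dop v m 0 p f (pt m p w z.1 z.2) = DopSx v p F₁ z + emb v m w * DbaropSx v p F₂ z := by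
  rw [Dop_eq_sum_castLE hp, emb_mul_DbaropSx hA hv hp hw.1, DopSx, ← Finset.sum_add_distrib]
  refine Finset.sum_congr rfl fun s _ => ?_
  have hpt : pt m p w (Pi.single s 1) 0 = Pi.single (Fin.castLE (Nat.succ_le_succ hp) s) 1 := by
    rw [pt, zero_smul, add_zero, injP_single hp]
  have hpd : fderiv ℝ f (pt m p w z.1 z.2) (pt m p w (Pi.single s 1) 0) =
      pdSx p s F₁ z + emb v m w * pdSx p s F₂ z :=
    h.fderiv_pt hA hD hw hf hF₁ hF₂ (Pi.single s 1, 0)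
  rw [pdF, ← hpt, hpd, hA.mul_add]

theorem Dop_xq [Nontrivial A] (h : Induced v m p D F₁ F₂ f) (hA : IsLeftAltAlg A)
    (hv : IsCliffordSystem v m) (hp : p < m + 1) (hD : D ∈ 𝓝 z) (hz : z.2 ≠ 0)
    (hw : w ∈ Sph v m p)
    (hf : DifferentiableAt ℝ f (pt m p w z.1 z.2)) (hF₁ : DifferentiableAt ℝ F₁ z)
    (hF₂ : DifferentiableAt ℝ F₂ z) :
    Dop v m (p + 1) m f (pt m p w z.1 z.2) =
      emb v m w * pdSr p F₁ z - pdSr p F₂ z - ((((m - p : ℕ) : ℝ) - 1) / z.2) • F₂ z := by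
  have hω : ∀ a, emb v m w * (emb v m w * a) = -a := hA.mul_mul_of_mul_self_eq_neg_one hw.2
  have hterm : ∀ s ∈ Finset.Ioi (⟨p, hp⟩ : Fin (m + 1)), v s * pdF m s f (pt m p w z.1 z.2) =
      w s • (v s * (pdSr p F₁ z + emb v m w * pdSr p F₂ z)) +
        z.2⁻¹ • (-F₂ z - w s • (v s * (emb v m w * F₂ z))) := fun s hs => by
    have hps : p < (s : ℕ) := Fin.lt_def.1 (Finset.mem_Ioi.1 hs)
    rw [pdF, h.fderiv_of_mem_qSubspace hA hv hD hz hw hf hF₁ hF₂ (single_mem_qSubspace hps 1),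
      dotProduct_single_one, emb_single_one, hA.mul_add, hA.mul_smul, hA.mul_smul, hA.mul_sub,
      hA.mul_smul, hA.mul_mul_of_mul_self_eq_neg_one (hv.mul_self s (by omega) s.is_le)]
  rw [Dop_eq_sum_Ioi hp, Finset.sum_congr rfl hterm, Finset.sum_add_distrib, ← Finset.smul_sum,
    Finset.sum_sub_distrib, ← emb_mul_of_mem_qSubspace hA hp hw.1,
    ← emb_mul_of_mem_qSubspace hA hp hw.1, hA.mul_add, hω, hω, Finset.sum_const, Fin.card_Ioi,
    Nat.add_sub_cancel, ← Nat.cast_smul_eq_nsmul ℝ]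
  module

theorem Dop_eq [Nontrivial A] (h : Induced v m p D F₁ F₂ f) (hA : IsLeftAltAlg A)
    (hv : IsCliffordSystem v m) (hp : p ≤ m) (hD : D ∈ 𝓝 z) (hz : z.2 ≠ 0) (hw : w ∈ Sph v m p)
    (hf : ∀ w ∈ Sph v m p, DifferentiableAt ℝ f (pt m p w z.1 z.2)) :
    Dop v m 0 m f (pt m p w z.1 z.2) =
      (DopSx v p F₁ z - pdSr p F₂ z - ((((m - p : ℕ) : ℝ) - 1) / z.2) • F₂ z) +
        emb v m w * (DbaropSx v p F₂ z + pdSr p F₁ z) := by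
  have hF₁ : DifferentiableAt ℝ F₁ z := h.differentiableAt_fst hA hD hw hf
  have hF₂ : DifferentiableAt ℝ F₂ z := h.differentiableAt_snd hA hD hw (hf w hw) hF₁
  rw [← Dop_add_Dop, h.Dop_xp hA hv hp hD hw (hf w hw) hF₁ hF₂,
    h.Dop_xq hA hv (Nat.lt_succ_of_le hp) hD hz hw (hf w hw) hF₁ hF₂, hA.mul_add]
  abel

end Induced

theorem eq_zero_of_forall_snd_ne_zero {X Y : Type*} [TopologicalSpace X] [TopologicalSpace Y]
    [T1Space Y] [Zero Y] {D : Set (X × ℝ)} {g : X × ℝ → Y} (hD : IsOpen D)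
    (hg : ContinuousOn g D) (hg₀ : ∀ z ∈ D, z.2 ≠ 0 → g z = 0) {z : X × ℝ} (hz : z ∈ D) :
    g z = 0 := by
  have hdense : Dense {z : X × ℝ | z.2 ≠ 0} :=
    (dense_compl_singleton (0 : ℝ)).preimage isOpenMap_snd
  have hcluster : z ∈ closure (D ∩ {z | z.2 ≠ 0}) := hdense.open_subset_closure_inter hD hz
  have hmem := (hg z hz).mono Set.inter_subset_left |>.mem_closure hcluster
    (t := {0}) fun y hy => hg₀ y hy.1 hy.2
  rwa [isClosed_singleton.closure_eq] at hmem

theorem vekua_characterization_general [Nontrivial A] (hA : IsLeftAltAlg A) {v : ℕ → A} {m p : ℕ}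
    (hv : IsCliffordSystem v m) (hp : p < m) {D : Set ((Fin (p + 1) → ℝ) × ℝ)} (hD : IsOpen D)
    {F₁ F₂ : (Fin (p + 1) → ℝ) × ℝ → A} {f : (Fin (m + 1) → ℝ) → A}
    (hind : Induced v m p D F₁ F₂ f) (hf : ContDiffOn ℝ 1 f (OmegaD v m p D)) :
    (∀ x ∈ OmegaD v m p D, Dop v m 0 m f x = 0) ↔
      (∀ z ∈ D, z.2 ≠ 0 →
        DopSx v p F₁ z - pdSr p F₂ z = ((((m - p : ℕ) : ℝ) - 1) / z.2) • F₂ z ∧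
        DbaropSx v p F₂ z + pdSr p F₁ z = 0) := by
  have hΩ : IsOpen (OmegaD v m p D) := isOpen_OmegaD hA hv hp hD
  have hDop : ∀ w ∈ Sph v m p, ∀ z ∈ D, z.2 ≠ 0 → Dop v m 0 m f (pt m p w z.1 z.2) =
      (DopSx v p F₁ z - pdSr p F₂ z - ((((m - p : ℕ) : ℝ) - 1) / z.2) • F₂ z) +
        emb v m w * (DbaropSx v p F₂ z + pdSr p F₁ z) := fun w hw z hz hr =>
    hind.Dop_eq hA hv hp.le (hD.mem_nhds hz) hr hw fun w hw =>
      (hf.differentiableOn one_ne_zero).differentiableAt (hΩ.mem_nhds ⟨w, hw, z, hz, rfl⟩)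
  constructor
  · intro hmono z hz hr
    have hw := single_last_mem_Sph hA hv hp
    have hpos := (hDop _ hw z hz hr).symm.trans (hmono _ ⟨_, hw, z, hz, rfl⟩)
    have hneg := (hDop _ (neg_mem_Sph hA hw) z hz hr).symm.trans
      (hmono _ ⟨_, neg_mem_Sph hA hw, z, hz, rfl⟩)
    rw [emb_neg] at hneg
    exact (hA.eq_zero_of_add_mul_eq_zero hw.2 hpos hneg).imp_left sub_eq_zero.1
  · rintro hvekua _ ⟨w, hw, z, hz, rfl⟩
    refine eq_zero_of_forall_snd_ne_zero hD ((continuousOn_Dop hA hΩ hf).comp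
      (ptL m p w).continuous.continuousOn fun z hz => ⟨w, hw, z, hz, rfl⟩) ?_ hz
    intro z hz hr
    obtain ⟨hfst, hsnd⟩ := hvekua z hz hr
    exact (hDop w hw z hz hr).trans (by rw [hfst, hsnd, sub_self, hA.mul_zero, add_zero])

/-- **Vekua-type characterization of monogenicity.** A generalized partial-slice
function `f = F₁ + ωF₂ ∈ GS¹(Ω_D) ∩ C¹(Ω_D, 𝔸)` is left monogenic on `Ω_D` if and
only if for all `x' ∈ D ∖ ℝ^{p+1}`:
`D_{x_p}F₁ - ∂_r F₂ = ((q-1)/r) F₂` and `D̄_{x_p}F₂ + ∂_r F₁ = 0`. -/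
theorem vekua_characterization
    {A : Type*} [NormedAddCommGroup A] [NormedSpace ℝ A] [Mul A] [One A]
    (conj : A → A) (H : IsAltStarAlg A conj)
    (v : ℕ → A) (m p : ℕ) (hv : IsHypBasis A conj v m) (hp : p < m)
    (D : Set ((Fin (p + 1) → ℝ) × ℝ)) (hD : IsOpen D) (hDconn : IsConnected D)
    (hDrefl : ∀ z ∈ D, reflD p z ∈ D)
    (F₁ F₂ : (Fin (p + 1) → ℝ) × ℝ → A) (hstem : IsStem p D F₁ F₂)
    (hF₁ : ContDiffOn ℝ 1 F₁ D) (hF₂ : ContDiffOn ℝ 1 F₂ D)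
    (f : (Fin (m + 1) → ℝ) → A) (hind : Induced v m p D F₁ F₂ f)
    (hf : ContDiffOn ℝ 1 f (OmegaD v m p D)) :
    (∀ x ∈ OmegaD v m p D, Dop v m 0 m f x = 0) ↔
      (∀ z ∈ D, z.2 ≠ 0 →
        DopSx v p F₁ z - pdSr p F₂ z =
          (((((m - p : ℕ) : ℝ)) - 1) / z.2) • F₂ z ∧
        DbaropSx v p F₂ z + pdSr p F₁ z = 0) := by
  have hA : IsLeftAltAlg A := H.isLeftAltAlg
  have : Nontrivial A :=
    Module.nontrivial_of_finrank_pos (R := ℝ) (zero_lt_one.trans H.one_lt_finrank)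
  exact vekua_characterization_general hA (hv.isCliffordSystem hA) hp hD hind hf

end GPSM
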